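/- arXiv:1612.05592 — 5 statements merged into one kernel-verified Lean document; each statement's English description precedes it below -/
import Mathlib

section
/- Let ψ : [0,1] → [0,1] be continuous and suppose that for some natural number p ≥ 1 the p-th iterate satisfies ψᵖ(x) = x for all x ∈ [0,1]. Then ψ(ψ(x)) = x for all x ∈ [0,1]. -/
/-- Nathanson's theorem: if `ψ : [0,1] → [0,1]` is continuous and `ψᵖ(x) = x` for all
`x ∈ [0,1]` for some `p ≥ 1`, then `ψ(ψ(x)) = x` on `[0,1]`. -/
theorem nathanson_square (ψ : ℝ → ℝ)
    (hmap : Set.MapsTo ψ (Set.Icc 0 1) (Set.Icc 0 1))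
    (hcont : ContinuousOn ψ (Set.Icc 0 1))
    (p : ℕ) (hp : 1 ≤ p)
    (hiter : ∀ x ∈ Set.Icc (0 : ℝ) 1, ψ^[p] x = x) :
    ∀ x ∈ Set.Icc (0 : ℝ) 1, ψ (ψ x) = x := by
  have hcoe : ∀ (n : ℕ) (y : Set.Icc (0 : ℝ) 1),
      (((hmap.restrict ψ _ _)^[n] y : Set.Icc (0 : ℝ) 1) : ℝ) = ψ^[n] y := by
    intro n
    induction n with
    | zero => intro y; rfl
    | succ n ih =>
      intro y
      rw [Function.iterate_succ_apply, Function.iterate_succ_apply, ih]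
      rfl
  have hfc : Continuous (hmap.restrict ψ _ _) := hcont.mapsToRestrict hmap
  have hfcoe : ∀ y, ((hmap.restrict ψ _ _ y : Set.Icc (0 : ℝ) 1) : ℝ) = ψ y := fun _ => rfl
  generalize hmap.restrict ψ _ _ = f at hcoe hfc hfcoe
  have hfp : ∀ y, f^[p] y = y := fun y => Subtype.ext ((hcoe p y).trans (hiter y y.2))
  have hinj : Function.Injective f := by
    intro a b hab
    rw [← hfp a, ← hfp b]
    obtain ⟨q, rfl⟩ : ∃ q, p = q + 1 := ⟨p - 1, by omega⟩
    rw [Function.iterate_succ_apply, Function.iterate_succ_apply, hab]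
  have hmono : StrictMono (f ∘ f) := by
    rcases hfc.strictMono_of_inj_boundedOrder' hinj with h | h
    · exact h.comp h
    · exact h.comp h
  have hffp : ∀ y, (f ∘ f)^[p] y = y := by
    intro y
    have h2 : f ∘ f = f^[2] := rfl
    rw [h2, ← Function.iterate_mul, mul_comm, Function.iterate_mul]
    change f^[p] (f^[p] y) = y
    rw [hfp, hfp]
  intro x hx
  have key : (f ∘ f) ⟨x, hx⟩ = id ⟨x, hx⟩ :=
    ((Function.Commute.id_right (f := f ∘ f)).iterate_pos_eq_iff_map_eq
      hmono.monotone strictMono_id (n := p) (by omega)).1 (by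
        rw [hffp, Function.iterate_id]; rfl)
  have := congrArg Subtype.val key
  simpa [hfcoe] using this
end

section
/- Let ψ : [0,1] → [0,1] be continuous and suppose that for some odd natural number p ≥ 1 the p-th iterate satisfies ψᵖ(x) = x for all x ∈ [0,1]. Then ψ(x) = x for all x ∈ [0,1]. -/
/-- Odd-period case of Nathanson's theorem: if `ψ : [0,1] → [0,1]` is continuous and
`ψᵖ(x) = x` on `[0,1]` for some odd `p ≥ 1`, then `ψ(x) = x` on `[0,1]`. -/
theorem nathanson_odd (ψ : ℝ → ℝ)
    (hmap : Set.MapsTo ψ (Set.Icc 0 1) (Set.Icc 0 1))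
    (hcont : ContinuousOn ψ (Set.Icc 0 1))
    (p : ℕ) (hp : 1 ≤ p) (hodd : Odd p)
    (hiter : ∀ x ∈ Set.Icc (0 : ℝ) 1, ψ^[p] x = x) :
    ∀ x ∈ Set.Icc (0 : ℝ) 1, ψ x = x := by
  let f : Set.Icc (0 : ℝ) 1 → Set.Icc (0 : ℝ) 1 := hmap.restrict ψ _ _
  have hf : Continuous f := hcont.mapsToRestrict hmap
  have hval : ∀ n x, ((f^[n] x : Set.Icc (0 : ℝ) 1) : ℝ) = ψ^[n] x := by
    intro n
    induction n with
    | zero => intro x; rfl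
    | succ n ih => intro x; rw [Function.iterate_succ_apply, Function.iterate_succ_apply, ih]; rfl
  have hfp : f^[p] = id := by
    funext x
    exact Subtype.ext ((hval p x).trans (hiter x x.2))
  have hinj : Function.Injective f := by
    have h : Function.Injective f^[p] := by rw [hfp]; exact Function.injective_id
    obtain ⟨q, rfl⟩ : ∃ q, p = q + 1 := ⟨p - 1, by omega⟩
    rw [Function.iterate_succ] at h
    exact h.of_comp
  have hmono : StrictMono f^[2] := by
    rcases hf.strictMono_of_inj_boundedOrder' hinj with h | h
    · exact h.comp h
    · exact h.comp h
  have h2 : ∀ x, f^[2] x = x := by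
    intro x
    have h := (Function.Commute.id_right (f := f^[2])).iterate_pos_eq_iff_map_eq
      hmono.monotone strictMono_id (x := x) (n := p) hp
    refine h.1 ?_
    rw [← Function.iterate_mul, mul_comm, Function.iterate_mul, hfp]
    simp
  obtain ⟨k, rfl⟩ := hodd
  intro x hx
  have h3 : f^[2] = id := funext h2
  rw [Function.iterate_add, Function.iterate_mul, h3, Function.iterate_id] at hfp
  exact congrArg Subtype.val (congrFun hfp ⟨x, hx⟩)
end

section
/- Let g : [0,1] → [0,1] be the tent map g(x) = 1 − |1 − 2x|, let g₂ : [0,1] → [0,1] be continuous with g₂(0) = 0 and g₂(1) = 0, and let h : [0,1] → [0,1] be a homeomorphism with h(g(x)) = g₂(h(x)) for all x ∈ [0,1]. Then the set M = { x ∈ [0,1] : g₂ᵏ(x) = 0 for some natural number k } is dense in [0,1]. -/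
theorem tent_mapsTo (g : ℝ → ℝ) (hg : ∀ x, g x = 1 - |1 - 2 * x|) (x : ℝ)
    (hx : x ∈ Set.Icc (0 : ℝ) 1) : g x ∈ Set.Icc (0 : ℝ) 1 := by
  obtain ⟨h0, h1⟩ := hx
  rw [hg]
  constructor
  · have : |1 - 2 * x| ≤ 1 := abs_le.2 ⟨by linarith, by linarith⟩
    linarith
  · linarith [abs_nonneg (1 - 2 * x)]

theorem tent_approx (g : ℝ → ℝ) (hg : ∀ x, g x = 1 - |1 - 2 * x|) (n : ℕ) :
    ∀ x ∈ Set.Icc (0 : ℝ) 1, ∃ y ∈ Set.Icc (0 : ℝ) 1,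
      |x - y| ≤ (1 / 2 : ℝ) ^ n ∧ g^[n] y = 0 := by
  induction n with
  | zero =>
    intro x hx
    refine ⟨0, by simp, ?_, by simp⟩
    rw [abs_le]; constructor <;> simp <;> linarith [hx.1, hx.2]
  | succ n ih =>
    intro x hx
    obtain ⟨z, hz, hd, hk⟩ := ih (g x) (tent_mapsTo g hg x hx)
    obtain ⟨z0, z1⟩ := hz
    rw [abs_le] at hd
    rcases le_total x (1 / 2) with hx2 | hx2
    · have e : g x = 2 * x := by rw [hg, abs_of_nonneg (by linarith)]; ring
      have e' : g (z / 2) = z := by rw [hg, abs_of_nonneg (by linarith)]; ring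
      refine ⟨z / 2, ⟨by linarith, by linarith⟩, ?_, ?_⟩
      · rw [e] at hd
        rw [abs_le, pow_succ]; constructor <;> linarith [hd.1, hd.2]
      · rw [Function.iterate_succ_apply, e', hk]
    · have e : g x = 2 - 2 * x := by rw [hg, abs_of_nonpos (by linarith)]; ring
      have e' : g (1 - z / 2) = z := by rw [hg, abs_of_nonpos (by linarith)]; ring
      refine ⟨1 - z / 2, ⟨by linarith, by linarith⟩, ?_, ?_⟩
      · rw [e] at hd
        rw [abs_le, pow_succ]; constructor <;> linarith [hd.1, hd.2]
      · rw [Function.iterate_succ_apply, e', hk]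

/-- Necessity in Ulam's criterion: if `h` is a homeomorphism of `[0,1]` conjugating the
tent map `g` to a continuous map `g₂ : [0,1] → [0,1]` with `g₂(0) = 0` and `g₂(1) = 0`,
then the set of points of `[0,1]` eventually mapped to `0` by `g₂` is dense in `[0,1]`. -/
theorem ulam_density_criterion (g g₂ h : ℝ → ℝ)
    (hg : ∀ x, g x = 1 - |1 - 2 * x|)
    (hg₂map : Set.MapsTo g₂ (Set.Icc 0 1) (Set.Icc 0 1))
    (hg₂cont : ContinuousOn g₂ (Set.Icc 0 1))
    (hg₂0 : g₂ 0 = 0) (hg₂1 : g₂ 1 = 0)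
    (hhcont : ContinuousOn h (Set.Icc 0 1))
    (hhbij : Set.BijOn h (Set.Icc 0 1) (Set.Icc 0 1))
    (hconj : ∀ x ∈ Set.Icc (0 : ℝ) 1, h (g x) = g₂ (h x)) :
    Set.Icc (0 : ℝ) 1 ⊆
      closure {x ∈ Set.Icc (0 : ℝ) 1 | ∃ k : ℕ, g₂^[k] x = 0} := by
  have hm0 : (0 : ℝ) ∈ Set.Icc (0 : ℝ) 1 := by simp
  have hm1 : (1 : ℝ) ∈ Set.Icc (0 : ℝ) 1 := by simp
  have g0 : g 0 = 0 := by rw [hg]; norm_num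
  have hh0 : h 0 = 0 := by
    rcases hhcont.strictMonoOn_of_injOn_Icc' zero_le_one hhbij.injOn with hm | hm
    · obtain ⟨a, ha, hae⟩ := hhbij.surjOn hm0
      have := hm.monotoneOn hm0 ha ha.1
      have := (hhbij.mapsTo hm0).1
      linarith
    · obtain ⟨a, ha, hae⟩ := hhbij.surjOn hm1
      have h1 := hm.antitoneOn hm0 ha ha.1
      have h2 := (hhbij.mapsTo hm0).2
      have h3 : h 0 = 1 := by linarith
      have h4 := hconj 0 hm0
      rw [g0, h3, hg₂1] at h4
      norm_num at h4
  have hit : ∀ k : ℕ, ∀ y ∈ Set.Icc (0 : ℝ) 1, h (g^[k] y) = g₂^[k] (h y) := by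
    intro k
    induction k with
    | zero => intro y _; rfl
    | succ k ih =>
      intro y hy
      rw [Function.iterate_succ_apply, Function.iterate_succ_apply,
        ih _ (tent_mapsTo g hg y hy), hconj y hy]
  intro x hx
  obtain ⟨y, hy, rfl⟩ := hhbij.surjOn hx
  have hcl : y ∈ closure {x ∈ Set.Icc (0 : ℝ) 1 | ∃ k : ℕ, g^[k] x = 0} := by
    rw [Metric.mem_closure_iff]
    intro ε hε
    obtain ⟨n, hn⟩ := exists_pow_lt_of_lt_one hε (by norm_num : (1 / 2 : ℝ) < 1)
    obtain ⟨z, hz, hd, hk⟩ := tent_approx g hg n y hy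
    exact ⟨z, ⟨hz, n, hk⟩, by rw [Real.dist_eq]; linarith⟩
  refine ((hhcont y hy).mono (Set.sep_subset _ _)).mem_closure hcl ?_
  rintro z ⟨hz, k, hk⟩
  exact ⟨hhbij.mapsTo hz, k, by rw [← hit k z hz, hk, hh0]⟩
end

section
/- Let g : [0,1] → [0,1] be the tent map g(x) = 1 − |1 − 2x|. Then for Lebesgue-almost every x₀ ∈ [0,1] the orbit of x₀ is uniformly equidistributed: for all real a, b with 0 ≤ a ≤ b ≤ 1, the proportion (1/N)·#{ i : 0 ≤ i < N and gⁱ(x₀) ∈ [a,b] } tends to b − a as N → ∞. -/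
open MeasureTheory

namespace TentAux

/-- Strong law for bounded variables with exponentially decaying correlations. -/
lemma slln {Ω : Type*} [MeasurableSpace Ω] (μ : Measure Ω) [IsProbabilityMeasure μ]
    (X : ℕ → Ω → ℝ) (hm : ∀ i, Measurable (X i)) (hb : ∀ i ω, |X i ω| ≤ 1)
    (hc : ∀ i j, i < j → ∫ ω, X i ω * X j ω ∂μ ≤ (1 / 2 : ℝ) ^ (j - i)) :
    ∀ᵐ ω ∂μ, Filter.Tendsto (fun N : ℕ => (∑ i ∈ Finset.range N, X i ω) / (N : ℝ))
      Filter.atTop (nhds 0) := by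
  have hbdint : ∀ (F : Ω → ℝ) (C : ℝ), Measurable F → (∀ ω, |F ω| ≤ C) → Integrable F μ := by
    intro F C h1 h2
    exact Integrable.of_bound h1.aestronglyMeasurable C (Filter.Eventually.of_forall h2)
  have hSm : ∀ N, Measurable (fun ω => ∑ i ∈ Finset.range N, X i ω) := fun N =>
    Finset.measurable_sum _ (fun i _ => hm i)
  have hSb : ∀ N ω, |∑ i ∈ Finset.range N, X i ω| ≤ N := by
    intro N ω
    calc |∑ i ∈ Finset.range N, X i ω| ≤ ∑ i ∈ Finset.range N, |X i ω| :=
          Finset.abs_sum_le_sum_abs _ _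
      _ ≤ ∑ i ∈ Finset.range N, (1 : ℝ) := Finset.sum_le_sum (fun i _ => hb i ω)
      _ = N := by simp
  have hXX : ∀ i j, Integrable (fun ω => X i ω * X j ω) μ := by
    intro i j
    refine hbdint _ 1 ((hm i).mul (hm j)) (fun ω => ?_)
    rw [abs_mul]
    exact mul_le_one₀ (hb i ω) (abs_nonneg _) (hb j ω)
  have hS2 : ∀ N, Integrable (fun ω => (∑ i ∈ Finset.range N, X i ω) ^ 2) μ := by
    intro N
    refine hbdint _ ((N : ℝ) ^ 2) ((hSm N).pow_const 2) (fun ω => ?_)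
    rw [abs_pow]
    exact pow_le_pow_left₀ (abs_nonneg _) (hSb N ω) 2
  have hcross : ∀ N, ∫ ω, (∑ i ∈ Finset.range N, X i ω) * X N ω ∂μ ≤ 1 := by
    intro N
    simp_rw [Finset.sum_mul]
    rw [integral_finsetSum _ (fun i _ => hXX i N)]
    have : ∀ N : ℕ, ∑ i ∈ Finset.range N, (1 / 2 : ℝ) ^ (N - i) = 1 - (1 / 2) ^ N := by
      intro N
      induction N with
      | zero => simp
      | succ n ih =>
        rw [Finset.sum_range_succ]
        have : ∑ i ∈ Finset.range n, (1 / 2 : ℝ) ^ (n + 1 - i)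
            = (1 / 2) * ∑ i ∈ Finset.range n, (1 / 2 : ℝ) ^ (n - i) := by
          rw [Finset.mul_sum]
          refine Finset.sum_congr rfl (fun i hi => ?_)
          have := Finset.mem_range.1 hi
          rw [show n + 1 - i = (n - i) + 1 by omega, pow_succ]
          ring
        rw [this, ih, show n + 1 - n = 1 by omega, pow_succ]
        ring
    calc ∑ i ∈ Finset.range N, ∫ ω, X i ω * X N ω ∂μ
        ≤ ∑ i ∈ Finset.range N, (1 / 2 : ℝ) ^ (N - i) :=
          Finset.sum_le_sum (fun i hi => hc i N (Finset.mem_range.1 hi))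
      _ ≤ 1 := by
          rw [this]
          have : (0 : ℝ) ≤ (1 / 2) ^ N := by positivity
          linarith
  have hvar : ∀ N : ℕ, ∫ ω, (∑ i ∈ Finset.range N, X i ω) ^ 2 ∂μ ≤ 3 * N := by
    intro N
    induction N with
    | zero => simp
    | succ n ih =>
      have e : ∀ ω, (∑ i ∈ Finset.range (n + 1), X i ω) ^ 2 =
          ((∑ i ∈ Finset.range n, X i ω) ^ 2 + 2 * ((∑ i ∈ Finset.range n, X i ω) * X n ω))
            + X n ω * X n ω := by
        intro ω
        rw [Finset.sum_range_succ]
        ring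
      have hcI : Integrable (fun ω => (∑ i ∈ Finset.range n, X i ω) * X n ω) μ := by
        simp_rw [Finset.sum_mul]
        exact integrable_finsetSum _ (fun i _ => hXX i n)
      simp_rw [e]
      have hadd : Integrable (fun ω => (∑ i ∈ Finset.range n, X i ω) ^ 2
          + 2 * ((∑ i ∈ Finset.range n, X i ω) * X n ω)) μ := (hS2 n).add (hcI.const_mul 2)
      rw [integral_add hadd (hXX n n),
        integral_add (hS2 n) (hcI.const_mul 2), integral_const_mul]
      have h1 : ∫ ω, X n ω * X n ω ∂μ ≤ 1 := by
        calc ∫ ω, X n ω * X n ω ∂μ ≤ ∫ ω, (1 : ℝ) ∂μ := by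
              refine integral_mono (hXX n n) (integrable_const _) (fun ω => ?_)
              have := abs_le.1 (hb n ω)
              show X n ω * X n ω ≤ 1
              nlinarith
          _ = 1 := by simp
      have := hcross n
      push_cast
      linarith
  -- along squares
  have hae : ∀ᵐ ω ∂μ, Filter.Tendsto
      (fun m : ℕ => (∑ i ∈ Finset.range (m ^ 2), X i ω) / ((m : ℝ) ^ 2))
      Filter.atTop (nhds 0) := by
    let Y : ℕ → Ω → ℝ := fun m ω => ((∑ i ∈ Finset.range (m ^ 2), X i ω) / ((m : ℝ) ^ 2)) ^ 2
    have hYm : ∀ m, Measurable (Y m) := fun m => ((hSm (m ^ 2)).div_const _).pow_const 2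
    have hYi : ∀ m, ∫⁻ ω, ENNReal.ofReal (Y m ω) ∂μ ≤ ENNReal.ofReal (3 / (m : ℝ) ^ 2) := by
      intro m
      have eY : ∀ ω, Y m ω = (∑ i ∈ Finset.range (m ^ 2), X i ω) ^ 2 * (1 / (m : ℝ) ^ 4) := by
        intro ω
        simp only [Y]
        rw [div_pow]
        ring
      rw [← ofReal_integral_eq_lintegral_ofReal]
      · apply ENNReal.ofReal_le_ofReal
        simp_rw [eY]
        rw [integral_mul_const]
        have h := hvar (m ^ 2)
        rcases Nat.eq_zero_or_pos m with h0 | h0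
        · subst h0; simp
        · have h0' : (0 : ℝ) < m := by exact_mod_cast h0
          calc _ ≤ (3 * ((m ^ 2 : ℕ) : ℝ)) * (1 / (m : ℝ) ^ 4) := by gcongr
            _ = 3 / (m : ℝ) ^ 2 := by
              push_cast
              field_simp
      · rw [show Y m = _ from funext eY]
        exact (hS2 _).mul_const _
      · exact Filter.Eventually.of_forall (fun ω => sq_nonneg _)
    have hsum : ∫⁻ ω, ∑' m, ENNReal.ofReal (Y m ω) ∂μ ≠ ⊤ := by
      rw [lintegral_tsum (fun m => (hYm m).ennreal_ofReal.aemeasurable)]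
      refine ne_top_of_le_ne_top ?_ (ENNReal.tsum_le_tsum hYi)
      have : Summable (fun m : ℕ => 3 / (m : ℝ) ^ 2) := by
        simp_rw [div_eq_mul_inv]
        exact (Real.summable_nat_pow_inv.2 (by norm_num)).mul_left 3
      exact this.tsum_ofReal_ne_top
    have hfin := ae_lt_top' (Measurable.ennreal_tsum
      (fun m => (hYm m).ennreal_ofReal)).aemeasurable hsum
    filter_upwards [hfin] with ω hω
    have h0 := ENNReal.tendsto_atTop_zero_of_tsum_ne_top hω.ne
    have h1 : Filter.Tendsto (fun m => Y m ω) Filter.atTop (nhds 0) := by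
      have := (ENNReal.tendsto_toReal ENNReal.zero_ne_top).comp h0
      refine this.congr (fun m => ?_)
      exact ENNReal.toReal_ofReal (sq_nonneg _)
    have h2 := h1.sqrt
    simp only [Y, Real.sqrt_sq_eq_abs, Real.sqrt_zero] at h2
    exact (tendsto_zero_iff_abs_tendsto_zero _).2 h2
  filter_upwards [hae] with ω hω
  have hsq : Filter.Tendsto Nat.sqrt Filter.atTop Filter.atTop := by
    refine Filter.tendsto_atTop.2 (fun b => ?_)
    filter_upwards [Filter.eventually_ge_atTop (b * b)] with N hN
    exact Nat.le_sqrt.2 hN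
  have hlim : Filter.Tendsto (fun m : ℕ =>
      |(∑ i ∈ Finset.range (m ^ 2), X i ω) / ((m : ℝ) ^ 2)| + 2 / (m : ℝ))
      Filter.atTop (nhds 0) := by
    have := hω.abs.add (tendsto_const_div_atTop_nhds_zero_nat (2 : ℝ))
    simpa using this
  refine squeeze_zero_norm' ?_ (hlim.comp hsq)
  filter_upwards [Filter.eventually_ge_atTop 1] with N hN
  simp only [Function.comp, Real.norm_eq_abs]
  set m := Nat.sqrt N with hmdef
  have hm1 : 1 ≤ m := Nat.le_sqrt.2 (by simpa using hN)
  have hmN : m ^ 2 ≤ N := Nat.sqrt_le' N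
  have hNm : N ≤ m ^ 2 + 2 * m := by
    have := Nat.sqrt_le_add N
    rw [← hmdef] at this
    nlinarith
  have hdiff : |(∑ i ∈ Finset.range N, X i ω) - ∑ i ∈ Finset.range (m ^ 2), X i ω| ≤ 2 * m := by
    rw [← Finset.sum_Ico_eq_sub _ hmN]
    calc _ ≤ ∑ i ∈ Finset.Ico (m ^ 2) N, |X i ω| := Finset.abs_sum_le_sum_abs _ _
      _ ≤ ∑ i ∈ Finset.Ico (m ^ 2) N, (1 : ℝ) := Finset.sum_le_sum (fun i _ => hb i ω)
      _ = ((N - m ^ 2 : ℕ) : ℝ) := by simp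
      _ ≤ ((2 * m : ℕ) : ℝ) := by
        exact_mod_cast (by omega : N - m ^ 2 ≤ 2 * m)
      _ = 2 * m := by push_cast; ring
  have hmpos : (0 : ℝ) < m := by exact_mod_cast hm1
  have hNr : (m : ℝ) ^ 2 ≤ N := by exact_mod_cast hmN
  have hNpos : (0 : ℝ) < N := by exact_mod_cast hN
  rw [abs_div, abs_div, abs_of_pos hNpos, abs_of_pos (pow_pos hmpos 2)]
  have htri := abs_sub_abs_le_abs_sub (∑ i ∈ Finset.range N, X i ω)
    (∑ i ∈ Finset.range (m ^ 2), X i ω)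
  calc |∑ i ∈ Finset.range N, X i ω| / (N : ℝ)
      ≤ (|∑ i ∈ Finset.range (m ^ 2), X i ω| + 2 * m) / (N : ℝ) := by
        gcongr
        linarith
    _ ≤ (|∑ i ∈ Finset.range (m ^ 2), X i ω| + 2 * m) / (m : ℝ) ^ 2 := by
        gcongr
    _ = _ := by
        field_simp

/-- the tent map -/
noncomputable def tent (x : ℝ) : ℝ := 1 - |1 - 2 * x|

lemma tent_meas : Measurable tent := by
  unfold tent
  fun_prop

lemma ii {F : ℝ → ℝ} {C : ℝ} (hF : Measurable F) (hC : ∀ x, |F x| ≤ C) (a b : ℝ) :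
    IntervalIntegrable F volume a b := by
  have : IntervalIntegrable (fun _ : ℝ => C) volume a b := intervalIntegrable_const
  refine this.mono_fun hF.aestronglyMeasurable (Filter.Eventually.of_forall (fun x => ?_))
  exact (hC x).trans (le_abs_self C)

lemma tent_left (F : ℝ → ℝ) (a : ℝ) (ha : 0 ≤ a) (ha' : a ≤ 1 / 2) :
    ∫ x in (0 : ℝ)..a, F (tent x) = (1 / 2) * ∫ x in (0 : ℝ)..(2 * a), F x := by
  have : ∫ x in (0 : ℝ)..a, F (tent x) = ∫ x in (0 : ℝ)..a, F (2 * x) := by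
    apply intervalIntegral.integral_congr
    intro x hx
    rw [Set.uIcc_of_le ha] at hx
    have h : tent x = 2 * x := by
      unfold tent
      rw [abs_of_nonneg (by linarith [hx.2])]
      ring
    simp only [h]
  rw [this, intervalIntegral.integral_comp_mul_left (fun x => F x) (by norm_num : (2 : ℝ) ≠ 0)]
  simp

lemma tent_right (F : ℝ → ℝ) (a : ℝ) (ha : 1 / 2 ≤ a) :
    ∫ x in (1 / 2 : ℝ)..a, F (tent x) = (1 / 2) * ∫ x in (2 - 2 * a)..1, F x := by
  have : ∫ x in (1 / 2 : ℝ)..a, F (tent x) = ∫ x in (1 / 2 : ℝ)..a, F (2 - 2 * x) := by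
    apply intervalIntegral.integral_congr
    intro x hx
    rw [Set.uIcc_of_le ha] at hx
    have h : tent x = 2 - 2 * x := by
      unfold tent
      rw [abs_of_nonpos (by linarith [hx.1])]
      ring
    simp only [h]
  rw [this, intervalIntegral.integral_comp_sub_mul (fun x => F x) (by norm_num : (2 : ℝ) ≠ 0)]
  norm_num

lemma tent_full {F : ℝ → ℝ} {C : ℝ} (hF : Measurable F) (hC : ∀ x, |F x| ≤ C)
    (a : ℝ) (ha : 1 / 2 ≤ a) :
    ∫ x in (0 : ℝ)..a, F (tent x)
      = (∫ x in (0 : ℝ)..1, F x) - (1 / 2) * ∫ x in (0 : ℝ)..(2 - 2 * a), F x := by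
  have h1 := ii (hF.comp tent_meas) (fun x => hC (tent x))
  have h2 := ii hF hC
  have e1 := intervalIntegral.integral_add_adjacent_intervals (h1 0 (1 / 2)) (h1 (1 / 2) a)
  have e2 := intervalIntegral.integral_add_adjacent_intervals (h2 0 (2 - 2 * a)) (h2 (2 - 2 * a) 1)
  simp only [Function.comp] at e1
  rw [tent_left F (1 / 2) (by norm_num) le_rfl, tent_right F a ha] at e1
  norm_num at e1 e2 ⊢
  linarith

lemma tent_inv {F : ℝ → ℝ} {C : ℝ} (hF : Measurable F) (hC : ∀ x, |F x| ≤ C) (n : ℕ) :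
    ∫ x in (0 : ℝ)..1, F (tent^[n] x) = ∫ x in (0 : ℝ)..1, F x := by
  induction n with
  | zero => simp
  | succ n ih =>
    simp only [Function.iterate_succ, Function.comp]
    have := tent_full (F := fun x => F (tent^[n] x)) (hF.comp (tent_meas.iterate n))
      (fun x => hC _) 1 (by norm_num)
    rw [this, ih]
    simp

lemma tent_decay {h : ℝ → ℝ} (hF : Measurable h) (hC : ∀ x, |h x| ≤ 1)
    (h0 : ∫ x in (0 : ℝ)..1, h x = 0) (n : ℕ) (a : ℝ) (ha : 0 ≤ a) (ha' : a ≤ 1) :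
    |∫ x in (0 : ℝ)..a, h (tent^[n] x)| ≤ (1 / 2) ^ n := by
  induction n generalizing a with
  | zero =>
    have := intervalIntegral.norm_integral_le_of_norm_le_const (a := (0 : ℝ)) (b := a) (f := h)
      (C := 1) (fun x _ => hC x)
    simp only [Real.norm_eq_abs, sub_zero, one_mul, abs_of_nonneg ha] at this
    simpa using this.trans ha'
  | succ n ih =>
    simp only [Function.iterate_succ, Function.comp]
    rcases le_total a (1 / 2) with h1 | h1
    · rw [tent_left (fun x => h (tent^[n] x)) a ha h1, abs_mul]
      have := ih (2 * a) (by linarith) (by linarith)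
      rw [pow_succ, abs_of_pos (by norm_num : (0 : ℝ) < 1 / 2)]
      linarith
    · rw [tent_full (F := fun x => h (tent^[n] x)) (hF.comp (tent_meas.iterate n))
        (fun x => hC _) a h1, tent_inv hF hC, h0, zero_sub, abs_neg, abs_mul]
      have := ih (2 - 2 * a) (by linarith) (by linarith)
      rw [pow_succ, abs_of_pos (by norm_num : (0 : ℝ) < 1 / 2)]
      linarith

/-- centred indicator -/
noncomputable def f (t x : ℝ) : ℝ := (Set.Iic t).indicator (fun _ => (1 : ℝ)) x - t

lemma f_meas (t : ℝ) : Measurable (f t) :=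
  (measurable_const.indicator measurableSet_Iic).sub measurable_const

lemma f_bd (t : ℝ) (h0 : 0 ≤ t) (h1 : t ≤ 1) (x : ℝ) : |f t x| ≤ 1 := by
  unfold f
  rw [abs_le]
  by_cases h : x ∈ Set.Iic t
  · rw [Set.indicator_of_mem h]
    constructor <;> linarith
  · rw [Set.indicator_of_notMem h]
    constructor <;> linarith

lemma f_mul {h : ℝ → ℝ} (hF : Measurable h) (hC : ∀ x, |h x| ≤ 1)
    (t : ℝ) (h0 : 0 ≤ t) (h1 : t ≤ 1) :
    ∫ x in (0 : ℝ)..1, f t x * h x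
      = (∫ x in (0 : ℝ)..t, h x) - t * ∫ x in (0 : ℝ)..1, h x := by
  have e : ∀ x, f t x * h x = (Set.Iic t).indicator h x - t * h x := by
    intro x
    unfold f
    by_cases hx : x ∈ Set.Iic t
    · rw [Set.indicator_of_mem hx, Set.indicator_of_mem hx]; ring
    · rw [Set.indicator_of_notMem hx, Set.indicator_of_notMem hx]; ring
  simp_rw [e]
  have hi : ∀ a b, IntervalIntegrable ((Set.Iic t).indicator h) volume a b := by
    refine ii (C := 1) (hF.indicator measurableSet_Iic) (fun x => ?_)
    by_cases hx : x ∈ Set.Iic t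
    · rw [Set.indicator_of_mem hx]; exact hC x
    · rw [Set.indicator_of_notMem hx]; simp
  rw [intervalIntegral.integral_sub (hi 0 1) ((ii hF hC 0 1).const_mul t),
    intervalIntegral.integral_const_mul]
  congr 1
  exact intervalIntegral.integral_indicator ⟨h0, h1⟩

lemma f_zero (t : ℝ) (h0 : 0 ≤ t) (h1 : t ≤ 1) : ∫ x in (0 : ℝ)..1, f t x = 0 := by
  have := f_mul (h := fun _ => 1) measurable_const (by simp) t h0 h1
  simpa using this

lemma icc_int (F : ℝ → ℝ) :
    ∫ x, F x ∂(volume.restrict (Set.Icc (0 : ℝ) 1)) = ∫ x in (0 : ℝ)..1, F x := by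
  rw [intervalIntegral.integral_of_le zero_le_one, integral_Icc_eq_integral_Ioc]

lemma f_slln (t : ℝ) (h0 : 0 ≤ t) (h1 : t ≤ 1) :
    ∀ᵐ x ∂(volume.restrict (Set.Icc (0 : ℝ) 1)),
      Filter.Tendsto (fun N : ℕ => (∑ i ∈ Finset.range N, f t (tent^[i] x)) / (N : ℝ))
      Filter.atTop (nhds 0) := by
  have : IsProbabilityMeasure (volume.restrict (Set.Icc (0 : ℝ) 1)) := ⟨by simp⟩
  refine slln _ (fun i x => f t (tent^[i] x)) (fun i => (f_meas t).comp (tent_meas.iterate i))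
    (fun i x => f_bd t h0 h1 _) ?_
  intro i j hij
  rw [icc_int]
  obtain ⟨k, rfl⟩ : ∃ k, j = k + i := ⟨j - i, by omega⟩
  have hm : Measurable (fun x => f t (tent^[k] x)) := (f_meas t).comp (tent_meas.iterate k)
  have hb : ∀ x, |f t (tent^[k] x)| ≤ 1 := fun x => f_bd t h0 h1 _
  have e := tent_inv (F := fun x => f t x * f t (tent^[k] x)) (C := 1) ((f_meas t).mul hm)
    (fun x => by
      rw [abs_mul]
      exact mul_le_one₀ (f_bd t h0 h1 _) (abs_nonneg _) (hb x)) i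
  simp only [Function.iterate_add_apply]
  rw [e, f_mul hm hb t h0 h1, tent_inv (f_meas t) (f_bd t h0 h1), f_zero t h0 h1]
  have := tent_decay (f_meas t) (f_bd t h0 h1) (f_zero t h0 h1) k t h0 h1
  simpa using (le_abs_self _).trans this

/-- visit frequency -/
noncomputable def freq (x q : ℝ) (N : ℕ) : ℝ :=
  (∑ i ∈ Finset.range N, (Set.Iic q).indicator (fun _ => (1 : ℝ)) (tent^[i] x)) / (N : ℝ)

lemma tent_mem {x : ℝ} (hx : x ∈ Set.Icc (0 : ℝ) 1) : tent x ∈ Set.Icc (0 : ℝ) 1 := by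
  unfold tent
  obtain ⟨h0, h1⟩ := hx
  have : |1 - 2 * x| ≤ 1 := abs_le.2 ⟨by linarith, by linarith⟩
  exact ⟨by linarith, by linarith [abs_nonneg (1 - 2 * x)]⟩

lemma tent_iter_mem {x : ℝ} (hx : x ∈ Set.Icc (0 : ℝ) 1) (i : ℕ) :
    tent^[i] x ∈ Set.Icc (0 : ℝ) 1 := by
  induction i with
  | zero => exact hx
  | succ n ih =>
    rw [Function.iterate_succ_apply']
    exact tent_mem ih

lemma freq_lim (q : ℝ) : ∀ᵐ x ∂(volume.restrict (Set.Icc (0 : ℝ) 1)),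
    Filter.Tendsto (freq x q) Filter.atTop (nhds (max 0 (min q 1))) := by
  have hmem : ∀ᵐ x ∂(volume.restrict (Set.Icc (0 : ℝ) 1)), x ∈ Set.Icc (0 : ℝ) 1 :=
    ae_restrict_mem measurableSet_Icc
  rcases lt_or_ge q 0 with hq | hq
  · filter_upwards [hmem] with x hx
    have : freq x q = fun _ => 0 := by
      funext N
      unfold freq
      rw [Finset.sum_eq_zero, zero_div]
      intro i _
      apply Set.indicator_of_notMem
      have := (tent_iter_mem hx i).1
      simp only [Set.mem_Iic, not_le]
      linarith
    rw [this, max_eq_left ((min_le_left _ _).trans hq.le)]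
    exact tendsto_const_nhds
  rcases lt_or_ge 1 q with hq1 | hq1
  · filter_upwards [hmem] with x hx
    rw [min_eq_right hq1.le, max_eq_right zero_le_one]
    refine tendsto_const_nhds.congr' ?_
    filter_upwards [Filter.eventually_ge_atTop 1] with N hN
    have hNpos : (0 : ℝ) < N := by exact_mod_cast hN
    unfold freq
    rw [Finset.sum_congr rfl (g := fun _ => (1 : ℝ))]
    · simp [hNpos.ne']
    · intro i _
      apply Set.indicator_of_mem
      have := (tent_iter_mem hx i).2
      simp only [Set.mem_Iic]
      linarith
  · filter_upwards [f_slln q hq hq1] with x hx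
    rw [min_eq_left hq1, max_eq_right hq]
    have := hx.add_const q
    rw [zero_add] at this
    refine this.congr' ?_
    filter_upwards [Filter.eventually_ge_atTop 1] with N hN
    have hNpos : (0 : ℝ) < N := by exact_mod_cast hN
    unfold freq f
    rw [Finset.sum_sub_distrib]
    simp
    field_simp
    ring

end TentAux

open TentAux
/-- Ulam–von Neumann: for the tent map `g(x) = 1 - |1 - 2x|`, for Lebesgue-almost every
`x₀ ∈ [0,1]` the orbit of `x₀` is uniformly equidistributed in `[0,1]`. -/
theorem tent_map_equidistribution (g : ℝ → ℝ)
    (hg : ∀ x, g x = 1 - |1 - 2 * x|) :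
    ∀ᵐ x₀ ∂(volume.restrict (Set.Icc (0 : ℝ) 1)),
      ∀ a b : ℝ, 0 ≤ a → a ≤ b → b ≤ 1 →
        Filter.Tendsto
          (fun N : ℕ =>
            ((Finset.range N).filter (fun i => g^[i] x₀ ∈ Set.Icc a b)).card / (N : ℝ))
          Filter.atTop (nhds (b - a)) := by
  obtain rfl : g = tent := funext hg
  have hall : ∀ᵐ x ∂(volume.restrict (Set.Icc (0 : ℝ) 1)), ∀ q : ℚ,
      Filter.Tendsto (freq x q) Filter.atTop (nhds (max 0 (min (q : ℝ) 1))) :=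
    ae_all_iff.2 (fun q => freq_lim q)
  filter_upwards [hall] with x hx a b ha hab hb
  have hcount : ∀ N : ℕ, (((Finset.range N).filter (fun i => tent^[i] x ∈ Set.Icc a b)).card : ℝ)
      = ∑ i ∈ Finset.range N, (Set.Icc a b).indicator (fun _ => (1 : ℝ)) (tent^[i] x) := by
    intro N
    rw [Finset.card_filter]
    push_cast
    refine Finset.sum_congr rfl (fun i _ => ?_)
    simp [Set.indicator_apply]
  have hcmp : ∀ q₁ q₂ : ℝ, ∀ N : ℕ, freq x q₂ N - freq x q₁ N =
      (∑ i ∈ Finset.range N, ((Set.Iic q₂).indicator (fun _ => (1 : ℝ)) (tent^[i] x)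
        - (Set.Iic q₁).indicator (fun _ => (1 : ℝ)) (tent^[i] x))) / (N : ℝ) := by
    intro q₁ q₂ N
    unfold freq
    rw [Finset.sum_sub_distrib, sub_div]
  rw [tendsto_order]
  constructor
  · intro c hc
    obtain ⟨q₁, h1, h1'⟩ := exists_rat_btwn (show a < a + (b - a - c) / 2 by linarith)
    obtain ⟨q₂, h2, h2'⟩ := exists_rat_btwn (show b - (b - a - c) / 2 < b by linarith)
    have hl := (hx q₂).sub (hx q₁)
    have hlt : c < max 0 (min (q₂ : ℝ) 1) - max 0 (min (q₁ : ℝ) 1) := by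
      have e1 : max 0 (min (q₁ : ℝ) 1) ≤ q₁ := max_le (by linarith) (min_le_left _ _)
      have e2 : (q₂ : ℝ) ≤ max 0 (min (q₂ : ℝ) 1) := by
        rw [min_eq_left (by linarith)]
        exact le_max_right _ _
      linarith
    filter_upwards [hl.eventually (lt_mem_nhds hlt)] with N hN
    refine hN.trans_le ?_
    rw [hcmp, hcount]
    gcongr with i hi
    simp only [Set.indicator_apply, Set.mem_Iic, Set.mem_Icc]
    split_ifs <;> first | (norm_num; done) | (exfalso; clear hl hlt hN hx hall hcount hcmp; grind)
  · intro c hc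
    obtain ⟨q₁, h1, h1'⟩ := exists_rat_btwn (show a - (c - (b - a)) / 2 < a by linarith)
    obtain ⟨q₂, h2, h2'⟩ := exists_rat_btwn (show b < b + (c - (b - a)) / 2 by linarith)
    have hl := (hx q₂).sub (hx q₁)
    have hlt : max 0 (min (q₂ : ℝ) 1) - max 0 (min (q₁ : ℝ) 1) < c := by
      have e1 : max 0 (min (q₂ : ℝ) 1) ≤ q₂ := max_le (by linarith) (min_le_left _ _)
      have e2 : (q₁ : ℝ) ≤ max 0 (min (q₁ : ℝ) 1) := by
        rw [min_eq_left (by linarith)]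
        exact le_max_right _ _
      linarith
    filter_upwards [hl.eventually (gt_mem_nhds hlt)] with N hN
    refine lt_of_le_of_lt ?_ hN
    rw [hcmp, hcount]
    gcongr with i hi
    simp only [Set.indicator_apply, Set.mem_Iic, Set.mem_Icc]
    split_ifs <;> first | (norm_num; done) | (exfalso; clear hl hlt hN hx hall hcount hcmp; grind)
end

section
/- Let f : [0,1] → [0,1] be the logistic map f(x) = 4x(1−x). Then for Lebesgue-almost every x₀ ∈ [0,1] the orbit of x₀ is equidistributed with respect to the arcsine distribution: for all real a, b with 0 ≤ a ≤ b ≤ 1, the proportion (1/N)·#{ i : 0 ≤ i < N and fⁱ(x₀) ∈ [a,b] } tends to (2/π)·(arcsin(√b) − arcsin(√a)) as N → ∞. -/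
open MeasureTheory


lemma lm_integral_fourier (m : ℤ) :
    ∫ t : AddCircle (1:ℝ), fourier m t ∂AddCircle.haarAddCircle = if m = 0 then 1 else 0 := by
  have h := congrFun (fourierCoeff_fourier (T := 1) m) 0
  rw [fourierCoeff] at h
  simp only [neg_zero, fourier_zero, one_smul] at h
  rw [h, Pi.single_apply]
  simp [eq_comm]

lemma lm_sq (n : ℤ) (hn : n ≠ 0) (N : ℕ) :
    ∫ t : AddCircle (1:ℝ), ‖∑ i ∈ Finset.range N, fourier (n * 2 ^ i) t‖ ^ 2
      ∂AddCircle.haarAddCircle = N := by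
  have key : ∀ t : AddCircle (1:ℝ),
      ((‖∑ i ∈ Finset.range N, fourier (n * 2 ^ i) t‖ ^ 2 : ℝ) : ℂ) =
      ∑ i ∈ Finset.range N, ∑ j ∈ Finset.range N, fourier (n * 2 ^ i + -(n * 2 ^ j)) t := by
    intro t
    push_cast
    rw [← Complex.mul_conj', map_sum, Finset.sum_mul_sum]
    simp only [fourier_add, fourier_neg]
  have : ((∫ t : AddCircle (1:ℝ), ‖∑ i ∈ Finset.range N, fourier (n * 2 ^ i) t‖ ^ 2
      ∂AddCircle.haarAddCircle : ℝ) : ℂ) = N := by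
    rw [← integral_complex_ofReal]
    simp_rw [key]
    have hi : ∀ m : ℤ, Integrable (fun t : AddCircle (1:ℝ) => (fourier m t : ℂ))
      AddCircle.haarAddCircle := fun m => (map_continuous (fourier m)).integrable_of_hasCompactSupport
        (HasCompactSupport.of_compactSpace _)
    rw [integral_finsetSum _ (fun i _ => integrable_finsetSum _ (fun j _ => hi _))]
    simp_rw [integral_finsetSum _ (fun j _ => hi _), lm_integral_fourier]
    have : ∀ i j : ℕ, (n * 2 ^ i + -(n * 2 ^ j) = 0) ↔ i = j := by
      intro i j
      rw [← sub_eq_add_neg, sub_eq_zero]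
      constructor
      · intro h
        have := mul_left_cancel₀ hn h
        exact Int.pow_right_injective (by norm_num) this
      · rintro rfl; rfl
    simp only [this]
    have h3 : ∀ i ∈ Finset.range N, (∑ j ∈ Finset.range N, if i = j then (1:ℂ) else 0) = 1 := by
      intro i hi
      rw [Finset.sum_ite_eq, if_pos hi]
    rw [Finset.sum_congr rfl h3]
    simp
  exact_mod_cast this

/-- interpolation -/
lemma lm_interp (u : ℕ → ℂ) (hu : ∀ i, ‖u i‖ ≤ 1)
    (h : Filter.Tendsto (fun m : ℕ => ‖∑ i ∈ Finset.range (m ^ 2), u i‖ / (m : ℝ) ^ 2)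
      Filter.atTop (nhds 0)) :
    Filter.Tendsto (fun N : ℕ => (∑ i ∈ Finset.range N, u i) / (N : ℂ))
      Filter.atTop (nhds 0) := by
  have hs : Filter.Tendsto Nat.sqrt Filter.atTop Filter.atTop := by
    refine Filter.tendsto_atTop.2 fun b => ?_
    filter_upwards [Filter.eventually_ge_atTop (b * b)] with a ha
    exact Nat.le_sqrt.2 ha
  have h2 : Filter.Tendsto (fun m : ℕ => ‖∑ i ∈ Finset.range (m ^ 2), u i‖ / (m : ℝ) ^ 2
      + 2 / (m : ℝ)) Filter.atTop (nhds 0) := by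
    have := h.add (tendsto_const_div_atTop_nhds_zero_nat (2:ℝ))
    simpa using this
  refine squeeze_zero_norm' ?_ (h2.comp hs)
  filter_upwards [Filter.eventually_ge_atTop 1] with N hN
  simp only [Function.comp]
  set m := Nat.sqrt N with hm
  have hm1 : 1 ≤ m := Nat.le_sqrt.2 (by simpa using hN)
  have hle : m ^ 2 ≤ N := by rw [hm]; exact Nat.sqrt_le' N
  have hlt : N ≤ m ^ 2 + 2 * m := by
    have := Nat.sqrt_le_add N
    rw [← hm] at this; nlinarith
  have hsplit : ‖∑ i ∈ Finset.range N, u i‖ ≤ ‖∑ i ∈ Finset.range (m ^ 2), u i‖ + 2 * m := by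
    obtain ⟨k, hk⟩ := Nat.exists_eq_add_of_le hle
    rw [hk, Finset.sum_range_add]
    refine (norm_add_le _ _).trans ?_
    gcongr
    refine (norm_sum_le_of_le _ (fun i _ => hu _)).trans ?_
    simp
    have : k ≤ 2 * m := by omega
    exact_mod_cast this
  have hmpos : (0:ℝ) < m := by exact_mod_cast hm1
  have hle' : (m:ℝ) ^ 2 ≤ N := by exact_mod_cast hle
  rw [norm_div, Complex.norm_natCast]
  calc ‖∑ i ∈ Finset.range N, u i‖ / (N:ℝ)
      ≤ (‖∑ i ∈ Finset.range (m ^ 2), u i‖ + 2 * m) / (m:ℝ) ^ 2 := by gcongr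
    _ = _ := by field_simp

lemma lm_ae (n : ℤ) (hn : n ≠ 0) :
    ∀ᵐ t : AddCircle (1:ℝ) ∂AddCircle.haarAddCircle,
    Filter.Tendsto (fun N : ℕ => (∑ i ∈ Finset.range N, fourier (n * 2 ^ i) t) / (N : ℂ))
      Filter.atTop (nhds 0) := by
  let F : ℕ → AddCircle (1:ℝ) → ℝ := fun m t =>
    (‖∑ i ∈ Finset.range (m ^ 2), fourier (n * 2 ^ i) t‖ / (m : ℝ) ^ 2) ^ 2
  have hFc : ∀ m, Continuous (F m) := by
    intro m; dsimp only [F]; fun_prop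
  have hF0 : ∀ m t, 0 ≤ F m t := fun m t => by positivity
  have hFint : ∀ m, ∫⁻ t, ENNReal.ofReal (F m t) ∂AddCircle.haarAddCircle
      = ENNReal.ofReal (1 / (m:ℝ) ^ 2) := by
    intro m
    rw [← ofReal_integral_eq_lintegral_ofReal
      ((hFc m).integrable_of_hasCompactSupport (HasCompactSupport.of_compactSpace _))
      (Filter.Eventually.of_forall (hF0 m))]
    congr 1
    simp only [F, div_pow]
    rw [integral_div, lm_sq n hn]
    rcases Nat.eq_zero_or_pos m with rfl | hm
    · simp
    · have : (m:ℝ) ≠ 0 := by positivity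
      push_cast; field_simp
  have hfin : ∫⁻ t, ∑' m, ENNReal.ofReal (F m t) ∂AddCircle.haarAddCircle ≠ ⊤ := by
    rw [lintegral_tsum (fun m => (hFc m).measurable.ennreal_ofReal.aemeasurable)]
    simp_rw [hFint]
    exact (Real.summable_one_div_nat_pow.2 (by norm_num)).tsum_ofReal_ne_top
  have hae := ae_lt_top (Measurable.tsum (fun m => (hFc m).measurable.ennreal_ofReal)) hfin
  filter_upwards [hae] with t ht
  apply lm_interp
  · intro i; rw [fourier_apply]; exact (Circle.norm_coe _).le
  · have h1 := ENNReal.tendsto_atTop_zero_of_tsum_ne_top ht.ne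
    have h2 := (ENNReal.tendsto_toReal (by simp : (0:ENNReal) ≠ ⊤)).comp h1
    have h3 : Filter.Tendsto (fun m => F m t) Filter.atTop (nhds 0) := by
      refine h2.congr fun m => ?_
      simp [ENNReal.toReal_ofReal (hF0 m t)]
    have h4 := h3.sqrt
    simp only [F, Real.sqrt_zero] at h4
    refine h4.congr fun m => ?_
    rw [Real.sqrt_sq (by positivity)]

lemma lm_weak (x : ℕ → AddCircle (1:ℝ))
    (h : ∀ n : ℤ, n ≠ 0 → Filter.Tendsto
      (fun N : ℕ => (∑ i ∈ Finset.range N, fourier n (x i)) / (N : ℂ)) Filter.atTop (nhds 0))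
    (F : C(AddCircle (1:ℝ), ℂ)) :
    Filter.Tendsto (fun N : ℕ => (∑ i ∈ Finset.range N, F (x i)) / (N : ℂ)) Filter.atTop
      (nhds (∫ t, F t ∂AddCircle.haarAddCircle)) := by
  have hint : ∀ G : C(AddCircle (1:ℝ), ℂ), Integrable (fun t => G t) AddCircle.haarAddCircle :=
    fun G => (map_continuous G).integrable_of_hasCompactSupport
        (HasCompactSupport.of_compactSpace _)
  have hspan : ∀ G ∈ Submodule.span ℂ (Set.range (@fourier 1)),
      Filter.Tendsto (fun N : ℕ => (∑ i ∈ Finset.range N, G (x i)) / (N : ℂ)) Filter.atTop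
      (nhds (∫ t, G t ∂AddCircle.haarAddCircle)) := by
    intro G hG
    induction hG using Submodule.span_induction with
    | mem G hG =>
      obtain ⟨n, rfl⟩ := hG
      rw [lm_integral_fourier]
      split_ifs with hn
      · subst hn
        refine tendsto_const_nhds.congr' ?_
        filter_upwards [Filter.eventually_ge_atTop 1] with N hN
        have : (N:ℂ) ≠ 0 := by exact_mod_cast (by omega : N ≠ 0)
        simp only [fourier_zero]
        simp [this]
      · exact h n hn
    | zero => simp
    | add G H _ _ hG hH =>
      simp only [ContinuousMap.add_apply]
      rw [integral_add (hint G) (hint H)]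
      refine (hG.add hH).congr fun N => ?_
      rw [Finset.sum_add_distrib, add_div]
    | smul c G _ hG =>
      simp only [ContinuousMap.smul_apply, smul_eq_mul]
      rw [integral_const_mul]
      refine (hG.const_mul c).congr fun N => ?_
      rw [← Finset.mul_sum, mul_div_assoc]
  rw [Metric.tendsto_atTop]
  intro ε hε
  have hF : F ∈ (Submodule.span ℂ (Set.range (@fourier 1))).topologicalClosure := by
    rw [span_fourier_closure_eq_top]; trivial
  have hF' : F ∈ closure ((Submodule.span ℂ (Set.range (@fourier 1))) :
    Set C(AddCircle (1:ℝ), ℂ)) := hF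
  obtain ⟨G, hG, hd⟩ := Metric.mem_closure_iff.1 hF' (ε / 3) (by positivity)
  obtain ⟨N0, hN0⟩ := Metric.tendsto_atTop.1 (hspan G hG) (ε / 3) (by positivity)
  have hpt : ∀ t, ‖F t - G t‖ ≤ ε / 3 := fun t => by
    rw [← dist_eq_norm]
    exact (ContinuousMap.dist_apply_le_dist t).trans hd.le
  refine ⟨max N0 1, fun N hN => ?_⟩
  have hN1 : 1 ≤ N := le_trans (le_max_right _ _) hN
  have hNpos : (0:ℝ) < N := by exact_mod_cast hN1
  have e1 : dist ((∑ i ∈ Finset.range N, F (x i)) / (N : ℂ))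
      ((∑ i ∈ Finset.range N, G (x i)) / (N : ℂ)) ≤ ε / 3 := by
    rw [dist_eq_norm, ← sub_div, ← Finset.sum_sub_distrib, norm_div, Complex.norm_natCast,
      div_le_iff₀ hNpos]
    refine (norm_sum_le_of_le _ (fun i _ => hpt _)).trans ?_
    simp [mul_comm]
  have e3 : dist (∫ t, G t ∂AddCircle.haarAddCircle) (∫ t, F t ∂AddCircle.haarAddCircle)
      ≤ ε / 3 := by
    rw [dist_comm, dist_eq_norm, ← integral_sub (hint F) (hint G)]
    refine (norm_integral_le_of_norm_le_const (Filter.Eventually.of_forall hpt)).trans ?_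
    simp
  have e2 := hN0 N (le_trans (le_max_left _ _) hN)
  have t1 := dist_triangle4 ((∑ i ∈ Finset.range N, F (x i)) / (N : ℂ))
    ((∑ i ∈ Finset.range N, G (x i)) / (N : ℂ)) (∫ t, G t ∂AddCircle.haarAddCircle)
    (∫ t, F t ∂AddCircle.haarAddCircle)
  linarith

lemma lm_sets (x : ℕ → AddCircle (1:ℝ))
    (h : ∀ n : ℤ, n ≠ 0 → Filter.Tendsto
      (fun N : ℕ => (∑ i ∈ Finset.range N, fourier n (x i)) / (N : ℂ)) Filter.atTop (nhds 0))
    (E : Set (AddCircle (1:ℝ))) (hEm : MeasurableSet E) [DecidablePred (· ∈ E)]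
    (hE : AddCircle.haarAddCircle (frontier E) = 0) :
    Filter.Tendsto (fun N : ℕ => (((Finset.range N).filter (fun i => x i ∈ E)).card : ℝ) / (N : ℝ))
      Filter.atTop (nhds (AddCircle.haarAddCircle E).toReal) := by
  let M : ℕ → Measure (AddCircle (1:ℝ)) := fun N =>
    ((N + 1 : ℕ) : ENNReal)⁻¹ • ∑ i ∈ Finset.range (N + 1), Measure.dirac (x i)
  have hM : ∀ N, IsProbabilityMeasure (M N) := by
    intro N
    constructor
    simp only [M, Measure.smul_apply, Measure.finsetSum_apply, measure_univ, smul_eq_mul,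
      Finset.sum_const, Finset.card_range, nsmul_eq_mul, mul_one]
    exact ENNReal.inv_mul_cancel (by simp) (by simp)
  let μs : ℕ → ProbabilityMeasure (AddCircle (1:ℝ)) := fun N => ⟨M N, hM N⟩
  let μ : ProbabilityMeasure (AddCircle (1:ℝ)) := ⟨AddCircle.haarAddCircle, inferInstance⟩
  have hlim : Filter.Tendsto μs Filter.atTop (nhds μ) := by
    rw [ProbabilityMeasure.tendsto_iff_forall_integral_rclike_tendsto ℂ]
    intro F
    have := (Filter.tendsto_add_atTop_iff_nat 1).2 (lm_weak x h F.toContinuousMap)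
    refine this.congr fun N => ?_
    change _ = ∫ ω, F ω ∂(M N)
    simp only [M]
    rw [integral_smul_measure, integral_finsetSum_measure]
    · have hN : ((N:ENNReal) + 1).toReal = N + 1 := by
        exact_mod_cast ENNReal.toReal_natCast (N + 1)
      simp [div_eq_inv_mul, hN]
    · intro i _
      exact integrable_dirac (by simp)
  have h1 := ProbabilityMeasure.tendsto_measure_of_null_frontier_of_tendsto' hlim (E := E) hE
  have h2 := (ENNReal.tendsto_toReal (measure_ne_top (μ : Measure _) E)).comp h1
  refine (Filter.tendsto_add_atTop_iff_nat 1).1 ?_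
  refine h2.congr fun N => ?_
  change (M N E).toReal = _
  simp only [M, Measure.smul_apply, Measure.finsetSum_apply, Measure.dirac_apply' _ hEm,
    smul_eq_mul, Set.indicator_apply, Pi.one_apply, Finset.sum_boole]
  have hN : ((N:ENNReal) + 1).toReal = N + 1 := by
    exact_mod_cast ENNReal.toReal_natCast (N + 1)
  simp [div_eq_inv_mul, hN]

/-- The semiconjugacy. -/
noncomputable def lmS (t : AddCircle (1:ℝ)) : ℝ := (1 - (fourier 1 t : ℂ).re) / 2

lemma lmS_coe (t : ℝ) : lmS (t : AddCircle (1:ℝ)) = Real.sin (Real.pi * t) ^ 2 := by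
  rw [lmS, fourier_coe_apply]
  have : (2 * Real.pi * Complex.I * ((1:ℤ):ℂ) * t / ((1:ℝ):ℂ) : ℂ)
    = ((2 * (Real.pi * t) : ℝ) : ℂ) * Complex.I := by push_cast; ring
  rw [this, Complex.exp_ofReal_mul_I_re, Real.cos_two_mul, Real.cos_sq']
  ring

lemma lmS_cont : Continuous lmS := by unfold lmS; fun_prop

lemma lm_iter (f : ℝ → ℝ) (hf : ∀ x, f x = 4 * x * (1 - x)) (t : ℝ) (i : ℕ) :
    f^[i] (Real.sin (Real.pi * t) ^ 2) = Real.sin (Real.pi * (2 ^ i * t)) ^ 2 := by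
  induction i with
  | zero => simp
  | succ i ih =>
    rw [Function.iterate_succ_apply', ih, hf, pow_succ 2 i,
      show Real.pi * (2 ^ i * 2 * t) = 2 * (Real.pi * (2 ^ i * t)) by ring, Real.sin_two_mul]
    have := Real.sin_sq_add_cos_sq (Real.pi * (2 ^ i * t))
    rw [show 1 - Real.sin (Real.pi * (2 ^ i * t)) ^ 2 = Real.cos (Real.pi * (2 ^ i * t)) ^ 2 by
      linarith]
    ring

lemma lm_haar : (AddCircle.haarAddCircle : Measure (AddCircle (1:ℝ))) = volume := by
  rw [AddCircle.volume_eq_smul_haarAddCircle]; simp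

lemma lm_mem (c t : ℝ) (hc : 0 ≤ c) (hc1 : c ≤ 1) (ht : |t| ≤ 1 / 2) :
    (c < Real.sin (Real.pi * t) ^ 2 ↔ Real.arcsin (Real.sqrt c) / Real.pi < |t|) ∧
    (c ≤ Real.sin (Real.pi * t) ^ 2 ↔ Real.arcsin (Real.sqrt c) / Real.pi ≤ |t|) := by
  have hpi := Real.pi_pos
  have habs : Real.sin (Real.pi * t) ^ 2 = Real.sin (Real.pi * |t|) ^ 2 := by
    rcases abs_cases t with ⟨h, _⟩ | ⟨h, _⟩ <;> rw [h]
    simp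
  have h0 : 0 ≤ Real.sin (Real.pi * |t|) :=
    Real.sin_nonneg_of_nonneg_of_le_pi (by positivity) (by nlinarith)
  have h1 : Real.sqrt c ∈ Set.Icc (-1:ℝ) 1 :=
    ⟨by linarith [Real.sqrt_nonneg c], Real.sqrt_le_one.2 hc1⟩
  have h2 : Real.pi * |t| ∈ Set.Icc (-(Real.pi / 2)) (Real.pi / 2) :=
    ⟨by have := abs_nonneg t; nlinarith, by nlinarith⟩
  constructor
  · rw [habs, div_lt_iff₀ hpi, mul_comm |t|, Real.arcsin_lt_iff_lt_sin h1 h2, Real.sqrt_lt hc h0]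
  · rw [habs, div_le_iff₀ hpi, mul_comm |t|, Real.arcsin_le_iff_le_sin h1 h2, Real.sqrt_le_left h0]

lemma lm_meas (a b : ℝ) (ha : 0 ≤ a) (hab : a ≤ b) (hb : b ≤ 1) :
    AddCircle.haarAddCircle (lmS ⁻¹' Set.Icc a b) =
      ENNReal.ofReal ((2 / Real.pi) *
            (Real.arcsin (Real.sqrt b) - Real.arcsin (Real.sqrt a))) := by
  have hpi := Real.pi_pos
  rw [lm_haar, AddCircle.add_projection_respects_measure 1 (-1/2)
    (lmS_cont.measurable measurableSet_Icc)]
  set α := Real.arcsin (Real.sqrt a) / Real.pi with hα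
  set β := Real.arcsin (Real.sqrt b) / Real.pi with hβ
  have hα0 : 0 ≤ α := div_nonneg (Real.arcsin_nonneg.2 (Real.sqrt_nonneg _)) hpi.le
  have hαβ : α ≤ β := by
    rw [hα, hβ]; gcongr
  have hβ1 : β ≤ 1 / 2 := by
    rw [hβ, div_le_iff₀ hpi]
    linarith [Real.arcsin_le_pi_div_two (Real.sqrt b)]
  have hset : (QuotientAddGroup.mk ⁻¹' (lmS ⁻¹' Set.Icc a b) ∩ Set.Icc (-1/2 : ℝ) (-1/2 + 1))
      = Set.Icc (-β) β \ Set.Ioo (-α) α := by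
    ext t
    have hl : lmS (QuotientAddGroup.mk t) = Real.sin (Real.pi * t) ^ 2 := lmS_coe t
    simp only [Set.mem_inter_iff, Set.mem_preimage, Set.mem_sdiff, Set.mem_Icc, Set.mem_Ioo, hl,
      ← abs_le, ← abs_lt, not_lt]
    constructor
    · rintro ⟨⟨h1, h2⟩, h3, h4⟩
      have ht : |t| ≤ 1 / 2 := abs_le.2 ⟨by linarith, by linarith⟩
      refine ⟨?_, ((lm_mem a t ha (hab.trans hb) ht).2).1 h1⟩
      by_contra hc
      exact absurd (((lm_mem b t (ha.trans hab) hb ht).1).2 (not_le.1 hc)) (not_lt.2 h2)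
    · rintro ⟨h1, h2⟩
      have ht : |t| ≤ 1 / 2 := h1.trans hβ1
      refine ⟨⟨((lm_mem a t ha (hab.trans hb) ht).2).2 h2, ?_⟩, ?_⟩
      · by_contra hc
        exact absurd (((lm_mem b t (ha.trans hab) hb ht).1).1 (not_le.1 hc)) (not_lt.2 h1)
      · have := abs_le.1 ht
        constructor <;> linarith [this.1, this.2]
  have hae : volume (QuotientAddGroup.mk ⁻¹' (lmS ⁻¹' Set.Icc a b) ∩ Set.Ioc (-1/2 : ℝ) (-1/2 + 1))
      = volume (Set.Icc (-β) β \ Set.Ioo (-α) α) := by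
    rw [← hset]
    exact measure_congr (Filter.EventuallyEq.rfl.inter Ioc_ae_eq_Icc)
  have hsub : Set.Ioo (-α) α ⊆ Set.Icc (-β) β :=
    fun t ht => ⟨by linarith [ht.1], by linarith [ht.2]⟩
  rw [hae, measure_sdiff hsub
    measurableSet_Ioo.nullMeasurableSet (by simp), Real.volume_Icc, Real.volume_Ioo,
    ← ENNReal.ofReal_sub _ (by linarith)]
  congr 1
  rw [hα, hβ]
  ring

theorem logistic_map_arcsine_equidistribution (f : ℝ → ℝ)
    (hf : ∀ x, f x = 4 * x * (1 - x)) :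
    ∀ᵐ x₀ ∂(volume.restrict (Set.Icc (0 : ℝ) 1)),
      ∀ a b : ℝ, 0 ≤ a → a ≤ b → b ≤ 1 →
        Filter.Tendsto
          (fun N : ℕ =>
            ((Finset.range N).filter (fun i => f^[i] x₀ ∈ Set.Icc a b)).card / (N : ℝ))
          Filter.atTop
          (nhds ((2 / Real.pi) *
            (Real.arcsin (Real.sqrt b) - Real.arcsin (Real.sqrt a)))) := by
  have hpi := Real.pi_pos
  let Good : AddCircle (1:ℝ) → Prop := fun t => ∀ n : ℤ, n ≠ 0 →
    Filter.Tendsto (fun N : ℕ => (∑ i ∈ Finset.range N, fourier (n * 2 ^ i) t) / (N : ℂ))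
      Filter.atTop (nhds 0)
  have hgood : ∀ᵐ t : AddCircle (1:ℝ), Good t := by
    rw [← lm_haar]
    refine ae_all_iff.2 fun n => ?_
    by_cases hn : n = 0
    · exact Filter.Eventually.of_forall fun t h => absurd hn h
    · filter_upwards [lm_ae n hn] with t ht _ using ht
  have hgoodR := (AddCircle.measurePreserving_mk 1 (-1/2)).quasiMeasurePreserving.ae hgood
  rw [ae_restrict_iff' measurableSet_Ioc, ae_iff] at hgoodR
  rw [ae_restrict_iff' measurableSet_Icc, ae_iff]
  refine measure_mono_null ?_ (addHaar_image_eq_zero_of_differentiableOn_of_addHaar_eq_zero volume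
    (f := fun t : ℝ => Real.sin (Real.pi * t) ^ 2) (by fun_prop) hgoodR)
  intro x hx
  simp only [Set.mem_ofPred_eq, Classical.not_imp] at hx
  obtain ⟨⟨hx0, hx1⟩, hx⟩ := hx
  set t := Real.arcsin (Real.sqrt x) / Real.pi with ht
  have hxt : Real.sin (Real.pi * t) ^ 2 = x := by
    rw [ht, mul_div_cancel₀ _ hpi.ne', Real.sin_arcsin (by linarith [Real.sqrt_nonneg x])
      (Real.sqrt_le_one.2 hx1), Real.sq_sqrt hx0]
  have ht0 : 0 ≤ t := div_nonneg (Real.arcsin_nonneg.2 (Real.sqrt_nonneg _)) hpi.le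
  have ht1 : t ≤ 1 / 2 := by
    rw [ht, div_le_iff₀ hpi]
    linarith [Real.arcsin_le_pi_div_two (Real.sqrt x)]
  refine ⟨t, ?_, hxt⟩
  simp only [Set.mem_ofPred_eq, Classical.not_imp]
  refine ⟨⟨by linarith, by linarith⟩, fun hG => hx ?_⟩
  intro a b ha hab hb
  let X : ℕ → AddCircle (1:ℝ) := fun i => ((2 ^ i * t : ℝ) : AddCircle (1:ℝ))
  have hX : ∀ n : ℤ, ∀ i, fourier n (X i) = fourier (n * 2 ^ i) (t : AddCircle (1:ℝ)) := by
    intro n i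
    simp only [X]
    rw [fourier_coe_apply, fourier_coe_apply]
    congr 1
    push_cast
    ring
  have hE : AddCircle.haarAddCircle (frontier (lmS ⁻¹' Set.Icc a b)) = 0 := by
    refine measure_mono_null (lmS_cont.frontier_preimage_subset _) ?_
    rw [frontier_Icc hab]
    have : ∀ c : ℝ, 0 ≤ c → c ≤ 1 → AddCircle.haarAddCircle (lmS ⁻¹' {c}) = 0 := by
      intro c hc hc1
      have := lm_meas c c hc le_rfl hc1
      simpa using this
    rw [show ({a, b} : Set ℝ) = {a} ∪ {b} from rfl, Set.preimage_union]
    exact measure_union_null (this a ha (hab.trans hb)) (this b (ha.trans hab) hb)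
  classical
  have key := lm_sets X (fun n hn => by simpa only [hX] using hG n hn) (lmS ⁻¹' Set.Icc a b)
    (lmS_cont.measurable measurableSet_Icc) hE
  rw [lm_meas a b ha hab hb, ENNReal.toReal_ofReal] at key
  · refine key.congr fun N => ?_
    congr 3
    ext i
    simp only [Finset.mem_filter, Set.mem_preimage, X, lmS_coe, ← lm_iter f hf, hxt]
  · have := Real.arcsin_le_arcsin (Real.sqrt_le_sqrt hab)
    have h2 : 0 ≤ 2 / Real.pi := by positivity
    exact mul_nonneg h2 (by linarith)
end
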